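/- arXiv:1710.01459 — 3 statements merged into one kernel-verified Lean document; each statement's English description precedes it below -/
import Mathlib

section
/- (Lemma 11.4 of the paper.) Assume a ∈ ℕ and a + D·(d₁ + … + d_l) < d. Then the set of a-dimensional complex subspaces E₀ of E such that E₀ ∩ F(v) = {0} for every v ∈ V is dense in the Grassmannian of a-dimensional subspaces of E; concretely: for every a-dimensional complex subspace E₁ of E and every ε > 0 there exists a ℂ-linear automorphism g of E with operator norm ‖g − id_E‖ < ε such that g(E₁) ∩ F(v) = {0} for all v ∈ V. -/
open scoped Manifold
open Bundle TopologicalSpace Module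

/-!
On each of finitely many strata of `V`, local frames of the bundles exhibit `F(v)` as locally
contained in the span of `∑ dᵢ` vectors depending on `v` in a `C¹` way. Hence the union of all
`F(v)` is covered by countably many `C¹` images of convex sets of real dimension `D + 2 ∑ dᵢ`, and
Hausdorff dimension shows that its complement is dense as soon as this number is less than `2d`.
Adding a fixed subspace of dimension `m` to every `F(v)` raises the bound by `2m`, so the vectors
of a basis of `E₁` can be moved one at a time, each to a nearby vector outside every
`F(v) + span(previous vectors)`. A small change of a linearly independent tuple is induced by an
automorphism of `E` close to the identity.
-/

theorem linearIndependent_mkQ_comp_cons {K M : Type*} [DivisionRing K] [AddCommGroup M]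
    [Module K M] {N : Submodule K M} {n : ℕ} {u : Fin n → M} {w : M}
    (hu : LinearIndependent K (N.mkQ ∘ u)) (hw : w ∉ N ⊔ Submodule.span K (Set.range u)) :
    LinearIndependent K (N.mkQ ∘ (Fin.cons w u : Fin (n + 1) → M)) := by
  rw [Fin.comp_cons, linearIndependent_finCons, Set.range_comp, Submodule.span_image]
  exact ⟨hu, fun h ↦ hw (N.comap_map_mkQ _ ▸ h)⟩

section Perturbation

open Topology

variable {𝕜 E : Type*} [NontriviallyNormedField 𝕜] [CompleteSpace 𝕜] [NormedAddCommGroup E]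
  [NormedSpace 𝕜 E] [FiniteDimensional 𝕜 E]

theorem eventually_exists_continuousLinearEquiv_norm_sub_id_lt {n : ℕ} {e : Fin n → E}
    (he : LinearIndependent 𝕜 e) {ε : ℝ} (hε : 0 < ε) :
    ∀ᶠ e' in 𝓝 e, ∃ g : E ≃L[𝕜] E,
      ‖(g : E →L[𝕜] E) - ContinuousLinearMap.id 𝕜 E‖ < ε ∧ g ∘ e = e' := by
  have : CompleteSpace E := FiniteDimensional.complete 𝕜 E
  obtain ⟨coord, hcoord⟩ := (Fintype.linearCombination 𝕜 e).exists_leftInverse_of_injective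
    (LinearMap.ker_eq_bot.2 he.fintypeLinearCombination_injective)
  have coord_apply (i : Fin n) : coord (e i) = Pi.single i 1 := by
    simpa using LinearMap.congr_fun hcoord (Pi.single i 1)
  let φ (i : Fin n) : E →L[𝕜] 𝕜 := (LinearMap.proj i ∘ₗ coord).toContinuousLinearMap
  let A (e' : Fin n → E) : E →L[𝕜] E :=
    ContinuousLinearMap.id 𝕜 E + ∑ i, (φ i).smulRight (e' i - e i)
  have hA_self : A e = ContinuousLinearMap.id 𝕜 E := by ext; simp [A]
  have hA_apply (e' : Fin n → E) (j : Fin n) : A e' (e j) = e' j := by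
    simp [A, φ, coord_apply, Pi.single_apply]
  have hA_cont : Continuous A := by
    have (i : Fin n) : Continuous fun e' : Fin n → E ↦ (φ i).smulRight (e' i - e i) :=
      (ContinuousLinearMap.smulRightL 𝕜 E E (φ i)).continuous.comp (by fun_prop)
    fun_prop
  have hA_tendsto : Filter.Tendsto A (𝓝 e) (𝓝 (ContinuousLinearMap.id 𝕜 E)) :=
    hA_self ▸ hA_cont.tendsto e
  filter_upwards [hA_tendsto (ContinuousLinearEquiv.refl 𝕜 E).nhds,
    hA_tendsto (Metric.ball_mem_nhds _ hε)] with e' ⟨g, hg⟩ hball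
  refine ⟨g, ?_, funext fun j ↦ ?_⟩
  · rw [hg, ← dist_eq_norm]
    exact hball
  · rw [← hA_apply e' j, ← hg]
    rfl

theorem exists_continuousLinearEquiv_forall_map_inf_eq_bot {V : Type*} {F : V → Submodule 𝕜 E}
    {E₁ : Submodule 𝕜 E}
    (hF : Dense {e : Fin (finrank 𝕜 E₁) → E | ∀ v, LinearIndependent 𝕜 ((F v).mkQ ∘ e)})
    {ε : ℝ} (hε : 0 < ε) :
    ∃ g : E ≃L[𝕜] E, ‖(g : E →L[𝕜] E) - ContinuousLinearMap.id 𝕜 E‖ < ε ∧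
      ∀ v, E₁.map ((g : E →L[𝕜] E) : E →ₗ[𝕜] E) ⊓ F v = ⊥ := by
  let b : Basis (Fin (finrank 𝕜 E₁)) 𝕜 E₁ := finBasis 𝕜 E₁
  let e : Fin (finrank 𝕜 E₁) → E := E₁.subtype ∘ b
  have he : LinearIndependent 𝕜 e := b.linearIndependent.map' _ E₁.ker_subtype
  have hspan : Submodule.span 𝕜 (Set.range e) = E₁ := by
    rw [Set.range_comp, Submodule.span_image, b.span_eq, Submodule.map_subtype_top]
  obtain ⟨_, hg, g, hgε, rfl⟩ :=
    hF.inter_nhds_nonempty (eventually_exists_continuousLinearEquiv_norm_sub_id_lt he hε)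
  refine ⟨g, hgε, fun v ↦ disjoint_iff.1 ?_⟩
  have hdisj := Submodule.range_ker_disjoint (hg v)
  rw [Submodule.ker_mkQ, Set.range_comp] at hdisj
  rwa [← hspan, Submodule.map_span]

end Perturbation

section HausdorffDimension

variable {𝕜 E H ι : Type*} [RCLike 𝕜] [NormedAddCommGroup E] [NormedSpace 𝕜 E] [NormedSpace ℝ E]
  [IsScalarTower ℝ 𝕜 E] [NormedAddCommGroup H] [NormedSpace ℝ H] [FiniteDimensional ℝ H]
  [Fintype ι]

theorem dimH_biUnion_span_range_le {s : Set H} (hs : Convex ℝ s) {φ : ι → H → E}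
    (hφ : ∀ i, ContDiffOn ℝ 1 (φ i) s) :
    dimH (⋃ x ∈ s, (Submodule.span 𝕜 (Set.range fun i ↦ φ i x) : Set E)) ≤
      (finrank ℝ H + finrank ℝ 𝕜 * Fintype.card ι : ℕ) := by
  let G : H × (ι → 𝕜) → E := fun p ↦ ∑ i, p.2 i • φ i p.1
  have hG : ContDiffOn ℝ 1 G (s ×ˢ Set.univ) := by
    refine ContDiffOn.sum fun i _ ↦ ContDiffOn.smul ?_ ?_
    · exact ContDiff.contDiffOn (by fun_prop)
    · exact (hφ i).comp contDiffOn_fst fun p hp ↦ hp.1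
  have hsub : (⋃ x ∈ s, (Submodule.span 𝕜 (Set.range fun i ↦ φ i x) : Set E)) ⊆
      G '' (s ×ˢ Set.univ) := by
    refine Set.iUnion₂_subset fun x hx y hy ↦ ?_
    obtain ⟨c, rfl⟩ := (Submodule.mem_span_range_iff_exists_fun 𝕜).1 hy
    exact ⟨(x, c), ⟨hx, Set.mem_univ c⟩, rfl⟩
  calc dimH (⋃ x ∈ s, (Submodule.span 𝕜 (Set.range fun i ↦ φ i x) : Set E))
      ≤ dimH (G '' (s ×ˢ Set.univ)) := dimH_mono hsub
    _ ≤ dimH (s ×ˢ (Set.univ : Set (ι → 𝕜))) :=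
        hG.dimH_image_le (hs.prod convex_univ) subset_rfl
    _ ≤ dimH (Set.univ : Set (H × (ι → 𝕜))) := dimH_mono (Set.subset_univ _)
    _ = (finrank ℝ H + finrank ℝ 𝕜 * Fintype.card ι : ℕ) := by
        rw [Real.dimH_univ_eq_finrank, finrank_prod, finrank_pi_fintype, Finset.sum_const,
          Finset.card_univ, smul_eq_mul, mul_comm]

end HausdorffDimension

section LocallySpanned

open Topology Set

variable {𝕜 E H B V : Type*} [RCLike 𝕜] [NormedAddCommGroup E] [NormedSpace 𝕜 E]
  [NormedSpace ℝ E] [NormedAddCommGroup H] [NormedSpace ℝ H] [TopologicalSpace B]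
  [TopologicalSpace V] [ChartedSpace B V] {I : ModelWithCorners ℝ H B}

/-- A family of subspaces `F v ⊆ E`, for `v` in a subset `s` of a manifold, is locally contained
in the span of `C¹` maps `φ i`, `i : ι`. The maps are `C¹` at the center `v₀` as maps on the
manifold, whereas the inclusion is only required at the points of `s` near `v₀`. -/
def LocallyC1SpannedOn (I : ModelWithCorners ℝ H B) (ι : Type*) (F : V → Submodule 𝕜 E)
    (s : Set V) : Prop :=
  ∀ v₀ ∈ s, ∃ φ : ι → V → E, (∀ i, ContMDiffAt I 𝓘(ℝ, E) 1 (φ i) v₀) ∧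
    ∀ᶠ v in 𝓝[s] v₀, F v ≤ Submodule.span 𝕜 (range fun i ↦ φ i v)

namespace LocallyC1SpannedOn

variable {ι : Type*} {F : V → Submodule 𝕜 E} {s t : Set V}

theorem mono (hF : LocallyC1SpannedOn I ι F s) (hts : t ⊆ s) : LocallyC1SpannedOn I ι F t :=
  fun v₀ hv₀ ↦ (hF v₀ (hts hv₀)).imp fun _ hφ ↦
    ⟨hφ.1, hφ.2.filter_mono (nhdsWithin_mono v₀ hts)⟩

theorem of_eq_bot (hF : ∀ v ∈ s, F v = ⊥) : LocallyC1SpannedOn I ι F s := fun _ _ ↦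
  ⟨0, fun _ ↦ contMDiffAt_const,
    eventually_nhdsWithin_of_forall fun v hv ↦ (hF v hv).trans_le bot_le⟩

theorem eq_bot [IsEmpty ι] (hF : LocallyC1SpannedOn I ι F s) {v : V} (hv : v ∈ s) : F v = ⊥ := by
  obtain ⟨φ, -, hle⟩ := hF v hv
  rw [eq_bot_iff, ← Submodule.span_empty, ← range_eq_empty fun i ↦ φ i v]
  exact hle.self_of_nhdsWithin hv

theorem iSup {α : Type*} [Finite α] {κ : α → Type*} {F : α → V → Submodule 𝕜 E}
    (hF : ∀ a, LocallyC1SpannedOn I (κ a) (F a) s) :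
    LocallyC1SpannedOn I (Σ a, κ a) (fun v ↦ ⨆ a, F a v) s := by
  intro v₀ hv₀
  choose φ hφ hle using fun a ↦ hF a v₀ hv₀
  refine ⟨fun k ↦ φ k.1 k.2, fun k ↦ hφ k.1 k.2, ?_⟩
  filter_upwards [Filter.eventually_all.2 hle] with v hv
  refine iSup_le fun a ↦ (hv a).trans (Submodule.span_mono ?_)
  rintro _ ⟨j, rfl⟩
  exact ⟨⟨a, j⟩, rfl⟩

theorem sup_span_range (hF : LocallyC1SpannedOn I ι F s) {κ : Type*} (u : κ → E) :
    LocallyC1SpannedOn I (ι ⊕ κ) (fun v ↦ F v ⊔ Submodule.span 𝕜 (range u)) s := by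
  intro v₀ hv₀
  obtain ⟨φ, hφ, hle⟩ := hF v₀ hv₀
  refine ⟨Sum.elim φ fun k _ ↦ u k, ?_, ?_⟩
  · rintro (i | k)
    exacts [hφ i, contMDiffAt_const]
  · filter_upwards [hle] with v hv
    refine sup_le (hv.trans (Submodule.span_mono ?_)) (Submodule.span_mono ?_)
    · rintro _ ⟨i, rfl⟩
      exact ⟨Sum.inl i, rfl⟩
    · rintro _ ⟨k, rfl⟩
      exact ⟨Sum.inr k, rfl⟩

end LocallyC1SpannedOn

variable [IsScalarTower ℝ 𝕜 E] [FiniteDimensional ℝ H] {ι : Type*} [Fintype ι]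

theorem exists_mem_nhds_dimH_biUnion_span_range_le {φ : ι → V → E} {v₀ : V}
    (hφ : ∀ i, ContMDiffAt I 𝓘(ℝ, E) 1 (φ i) v₀) :
    ∃ N ∈ 𝓝 v₀, dimH (⋃ v ∈ N, (Submodule.span 𝕜 (range fun i ↦ φ i v) : Set E)) ≤
      (finrank ℝ H + finrank ℝ 𝕜 * Fintype.card ι : ℕ) := by
  let c : PartialEquiv V H := extChartAt I v₀
  have hC1 : ∀ᶠ x in 𝓝[range I] c v₀, ∀ i,
      ContDiffWithinAt ℝ 1 (φ i ∘ c.symm) (range I) x := by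
    refine Filter.eventually_all.2 fun i ↦ ?_
    have := (contMDiffAt_iff.1 (hφ i)).2.eventually (by simp)
    rwa [insert_eq_of_mem (extChartAt_target_subset_range v₀ (mem_extChartAt_target v₀))] at this
  obtain ⟨r, hr, hball⟩ := Metric.mem_nhdsWithin_iff.1 hC1
  have hconvex : Convex ℝ (Metric.ball (c v₀) r ∩ range I) :=
    (convex_ball _ _).inter I.convex_range
  refine ⟨c.source ∩ c ⁻¹' Metric.ball (c v₀) r,
    Filter.inter_mem (extChartAt_source_mem_nhds v₀)
      (continuousAt_extChartAt v₀ (Metric.ball_mem_nhds _ hr)), ?_⟩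
  refine (dimH_mono ?_).trans (dimH_biUnion_span_range_le (𝕜 := 𝕜) hconvex
    (φ := fun i ↦ φ i ∘ c.symm) fun i x hx ↦ (hball hx i).mono inter_subset_right)
  refine iUnion₂_subset fun v hv y hy ↦ mem_iUnion₂.2
    ⟨c v, ⟨hv.2, extChartAt_target_subset_range v₀ (c.map_source hv.1)⟩, ?_⟩
  simpa only [Function.comp_apply, c.left_inv hv.1] using hy

variable [SecondCountableTopology V] {F : V → Submodule 𝕜 E}

theorem LocallyC1SpannedOn.dimH_biUnion_le {s : Set V} (hF : LocallyC1SpannedOn I ι F s) :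
    dimH (⋃ v ∈ s, (F v : Set E)) ≤ (finrank ℝ H + finrank ℝ 𝕜 * Fintype.card ι : ℕ) := by
  have hloc (v₀ : V) (hv₀ : v₀ ∈ s) : ∃ N ∈ 𝓝[s] v₀,
      dimH (⋃ v ∈ N, (F v : Set E)) ≤ (finrank ℝ H + finrank ℝ 𝕜 * Fintype.card ι : ℕ) := by
    obtain ⟨φ, hφ, hle⟩ := hF v₀ hv₀
    obtain ⟨N, hN, hdim⟩ := exists_mem_nhds_dimH_biUnion_span_range_le (𝕜 := 𝕜) hφ
    refine ⟨_, Filter.inter_mem hle (mem_nhdsWithin_of_mem_nhds hN), (dimH_mono ?_).trans hdim⟩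
    exact iUnion₂_subset fun v hv y hy ↦ mem_iUnion₂.2 ⟨v, hv.2, hv.1 hy⟩
  choose! N hN hdim using hloc
  obtain ⟨t, hts, htc, hst⟩ := countable_cover_nhdsWithin hN
  calc dimH (⋃ v ∈ s, (F v : Set E))
      ≤ dimH (⋃ v₀ ∈ t, ⋃ v ∈ N v₀, (F v : Set E)) := by
        refine dimH_mono (iUnion₂_subset fun v hv y hy ↦ ?_)
        obtain ⟨v₀, hv₀, hv⟩ := mem_iUnion₂.1 (hst hv)
        exact mem_iUnion₂.2 ⟨v₀, hv₀, mem_iUnion₂.2 ⟨v, hv, hy⟩⟩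
    _ = ⨆ v₀ ∈ t, dimH (⋃ v ∈ N v₀, (F v : Set E)) := dimH_bUnion htc _
    _ ≤ _ := iSup₂_le fun v₀ hv₀ ↦ hdim v₀ (hts hv₀)

variable [FiniteDimensional 𝕜 E] {κ : Type*} [Countable κ] {S : κ → Set V}

theorem dense_setOf_forall_notMem (hS : ∀ v, ∃ k, v ∈ S k)
    (hF : ∀ k, LocallyC1SpannedOn I ι F (S k))
    (hdim : finrank ℝ H + finrank ℝ 𝕜 * Fintype.card ι < finrank ℝ 𝕜 * finrank 𝕜 E) :
    Dense {w : E | ∀ v, w ∉ F v} := by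
  have : FiniteDimensional ℝ E := FiniteDimensional.trans ℝ 𝕜 E
  have hsmall : dimH (⋃ k, ⋃ v ∈ S k, (F v : Set E)) < finrank ℝ E := by
    rw [dimH_iUnion, ← finrank_mul_finrank ℝ 𝕜 E]
    exact (iSup_le fun k ↦ (hF k).dimH_biUnion_le).trans_lt (Nat.cast_lt.2 hdim)
  refine Dense.mono ?_ (dense_compl_of_dimH_lt_finrank hsmall)
  intro w hw v hwv
  obtain ⟨k, hk⟩ := hS v
  exact hw (mem_iUnion.2 ⟨k, mem_iUnion₂.2 ⟨v, hk, hwv⟩⟩)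

theorem dense_setOf_forall_linearIndependent_mkQ (hS : ∀ v, ∃ k, v ∈ S k)
    (hF : ∀ k, LocallyC1SpannedOn I ι F (S k)) (n : ℕ)
    (hdim : finrank ℝ H + finrank ℝ 𝕜 * (n + Fintype.card ι) <
      finrank ℝ 𝕜 * (finrank 𝕜 E + 1)) :
    Dense {e : Fin n → E | ∀ v, LinearIndependent 𝕜 ((F v).mkQ ∘ e)} := by
  induction n with
  | zero => exact dense_univ.mono fun _ _ _ ↦ linearIndependent_empty_type
  | succ n ih =>
    refine Metric.dense_iff.2 fun e r hr ↦ ?_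
    obtain ⟨u, hur, hu⟩ := Metric.dense_iff.1 (ih (by lia)) (Fin.tail e) r hr
    have hdense : Dense {w : E | ∀ v, w ∉ F v ⊔ Submodule.span 𝕜 (range u)} := by
      refine dense_setOf_forall_notMem hS (fun k ↦ (hF k).sup_span_range u) ?_
      rw [Fintype.card_sum, Fintype.card_fin]
      lia
    obtain ⟨w, hwr, hw⟩ := Metric.dense_iff.1 hdense (e 0) r hr
    refine ⟨Fin.cons w u, ?_, fun v ↦ linearIndependent_mkQ_comp_cons (hu v) (hw v)⟩
    rw [Metric.mem_ball, dist_pi_lt_iff hr] at hur ⊢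
    exact Fin.forall_fin_succ.2 ⟨hwr, hur⟩

theorem exists_continuousLinearEquiv_forall_map_inf_eq_bot_of_locallyC1SpannedOn
    (hS : ∀ v, ∃ k, v ∈ S k) (hF : ∀ k, LocallyC1SpannedOn I ι F (S k)) (E₁ : Submodule 𝕜 E)
    (hdim : 0 < Fintype.card ι → finrank ℝ H + finrank ℝ 𝕜 * (finrank 𝕜 E₁ + Fintype.card ι) <
      finrank ℝ 𝕜 * (finrank 𝕜 E + 1)) {ε : ℝ} (hε : 0 < ε) :
    ∃ g : E ≃L[𝕜] E, ‖(g : E →L[𝕜] E) - ContinuousLinearMap.id 𝕜 E‖ < ε ∧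
      ∀ v, E₁.map ((g : E →L[𝕜] E) : E →ₗ[𝕜] E) ⊓ F v = ⊥ := by
  rcases isEmpty_or_nonempty ι with hι | hι
  · refine ⟨ContinuousLinearEquiv.refl 𝕜 E, by simpa using hε, fun v ↦ ?_⟩
    obtain ⟨k, hk⟩ := hS v
    rw [(hF k).eq_bot hk, inf_bot_eq]
  · exact exists_continuousLinearEquiv_forall_map_inf_eq_bot
      (dense_setOf_forall_linearIndependent_mkQ hS hF _ (hdim Fintype.card_pos)) hε

end LocallySpanned

section FiberwiseImage

open Topology Set

theorem span_range_fiber_le_span_range_trivialization_symm {R E M X : Type*} [Semiring R]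
    [AddCommMonoid E] [Module R E] [TopologicalSpace M] [AddCommMonoid M] [Module R M]
    [TopologicalSpace X] {Z : X → Type*} [TopologicalSpace (TotalSpace M Z)]
    [∀ x, AddCommMonoid (Z x)] [∀ x, Module R (Z x)] (τ : Trivialization M (π M Z))
    [τ.IsLinear R] {f : TotalSpace M Z → E} {x : X} (hx : x ∈ τ.baseSet)
    (hf : IsLinearMap R fun w : Z x ↦ f ⟨x, w⟩) {κ : Type*} (b : Basis κ R M) :
    Submodule.span R (range fun w : Z x ↦ f ⟨x, w⟩) ≤
      Submodule.span R (range fun j ↦ f ⟨x, τ.symm x (b j)⟩) := by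
  let L : Z x →ₗ[R] E := hf.mk' _
  let b' : Basis κ R (Z x) := b.map (τ.linearEquivAt R x hx).symm
  calc Submodule.span R (range L)
      = (⊤ : Submodule R (Z x)).map L := by
        rw [Submodule.map_top, ← L.coe_range, Submodule.span_eq]
    _ = Submodule.span R (range (L ∘ b')) := by
        rw [← b'.span_eq, Submodule.map_span, range_comp]
    _ ≤ _ := Submodule.span_mono (by rintro _ ⟨j, rfl⟩; exact ⟨j, by simp [L, b']⟩)

/-- The subspace of `E` spanned by the image under `f` of the fiber over `v`, for a map `f` on the
total space of a bundle over an open set `U`; it is `⊥` for `v ∉ U`. -/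
def fiberwiseImage (R : Type*) {E V M : Type*} [Semiring R] [AddCommMonoid E] [Module R E]
    [TopologicalSpace V] {U : Opens V} {Z : U → Type*} (f : TotalSpace M Z → E) (v : V) :
    Submodule R E :=
  ⨆ h : v ∈ U, Submodule.span R (range fun w : Z ⟨v, h⟩ ↦ f ⟨⟨v, h⟩, w⟩)

variable {𝕜 E H B V M : Type*} [RCLike 𝕜] [NormedAddCommGroup E] [NormedSpace 𝕜 E]
  [NormedSpace ℝ E] [NormedAddCommGroup H] [NormedSpace ℝ H] [TopologicalSpace B]
  [TopologicalSpace V] [ChartedSpace B V] {I : ModelWithCorners ℝ H B} [NormedAddCommGroup M]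
  [NormedSpace ℝ M]

theorem contMDiffAt_mk_trivializationAt_symm {n : WithTop ℕ∞} {Z : V → Type*} [∀ x, Zero (Z x)]
    [∀ x, TopologicalSpace (Z x)] [TopologicalSpace (TotalSpace M Z)] [FiberBundle M Z]
    (x₀ : V) (z : M) :
    ContMDiffAt I (I.prod 𝓘(ℝ, M)) n
      (fun x ↦ TotalSpace.mk' M x ((trivializationAt M Z x₀).symm x z)) x₀ := by
  rw [contMDiffAt_section]
  refine (contMDiffAt_const (c := z)).congr_of_eventuallyEq ?_
  filter_upwards [(trivializationAt M Z x₀).open_baseSet.mem_nhds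
    (mem_baseSet_trivializationAt M Z x₀)] with x hx
  rw [(trivializationAt M Z x₀).apply_mk_symm hx]

theorem locallyC1SpannedOn_fiberwiseImage [NormedSpace 𝕜 M] {U : Opens V} {Z : U → Type*}
    [∀ x, AddCommGroup (Z x)] [∀ x, Module 𝕜 (Z x)] [∀ x, TopologicalSpace (Z x)]
    [TopologicalSpace (TotalSpace M Z)] [FiberBundle M Z] [VectorBundle 𝕜 M Z]
    {f : TotalSpace M Z → E} (hf : ContMDiff (I.prod 𝓘(ℝ, M)) 𝓘(ℝ, E) 1 f)
    (hlin : ∀ x, IsLinearMap 𝕜 fun w : Z x ↦ f ⟨x, w⟩) {κ : Type*} (b : Basis κ 𝕜 M) :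
    LocallyC1SpannedOn I κ (fiberwiseImage 𝕜 f) U := by
  intro v₀ hv₀
  let x₀ : U := ⟨v₀, hv₀⟩
  let τ := trivializationAt M Z x₀
  let φ (j : κ) (x : U) : E := f ⟨x, τ.symm x (b j)⟩
  have hφ (j : κ) : ContMDiffAt I 𝓘(ℝ, E) 1 (φ j) x₀ :=
    hf.contMDiffAt.comp x₀ (contMDiffAt_mk_trivializationAt_symm x₀ (b j))
  have hextend (j : κ) (x : U) : Subtype.val.extend (φ j) 0 (x : V) = φ j x :=
    Subtype.val_injective.extend_apply _ _ _
  refine ⟨fun j ↦ Subtype.val.extend (φ j) 0, fun j ↦ ?_, ?_⟩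
  · rw [← contMDiffAt_subtype_iff (U := U) (x := x₀)]
    simpa only [hextend] using hφ j
  · rw [nhdsWithin_eq_map_subtype_coe hv₀, Filter.eventually_map]
    filter_upwards [τ.open_baseSet.mem_nhds (mem_baseSet_trivializationAt M Z x₀)] with x hx
    simp only [hextend]
    exact iSup_le fun _ ↦ span_range_fiber_le_span_range_trivialization_symm τ hx (hlin x) b

end FiberwiseImage

theorem dense_subspaces_transverse_to_fiberwise_images_general
    {𝕜 E H B V α : Type*} [RCLike 𝕜] [NormedAddCommGroup E] [NormedSpace 𝕜 E] [NormedSpace ℝ E]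
    [IsScalarTower ℝ 𝕜 E] [FiniteDimensional 𝕜 E] [NormedAddCommGroup H] [NormedSpace ℝ H]
    [FiniteDimensional ℝ H] [TopologicalSpace B] {I : ModelWithCorners ℝ H B}
    [TopologicalSpace V] [SecondCountableTopology V] [ChartedSpace B V] [Fintype α]
    {U : α → Opens V} {M : α → Type*} [∀ i, NormedAddCommGroup (M i)] [∀ i, NormedSpace ℝ (M i)]
    [∀ i, NormedSpace 𝕜 (M i)] [∀ i, FiniteDimensional 𝕜 (M i)] {Z : ∀ i, U i → Type*}
    [∀ i x, AddCommGroup (Z i x)] [∀ i x, Module 𝕜 (Z i x)] [∀ i x, TopologicalSpace (Z i x)]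
    [∀ i, TopologicalSpace (TotalSpace (M i) (Z i))] [∀ i, FiberBundle (M i) (Z i)]
    [∀ i, VectorBundle 𝕜 (M i) (Z i)] {f : ∀ i, TotalSpace (M i) (Z i) → E}
    (hf : ∀ i, ContMDiff (I.prod 𝓘(ℝ, M i)) 𝓘(ℝ, E) 1 (f i))
    (hlin : ∀ i x, IsLinearMap 𝕜 fun w : Z i x ↦ f i ⟨x, w⟩) (E₁ : Submodule 𝕜 E)
    (hdim : 0 < ∑ i, finrank 𝕜 (M i) →
      finrank ℝ H + finrank ℝ 𝕜 * (finrank 𝕜 E₁ + ∑ i, finrank 𝕜 (M i)) <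
        finrank ℝ 𝕜 * (finrank 𝕜 E + 1))
    {ε : ℝ} (hε : 0 < ε) :
    ∃ g : E ≃L[𝕜] E, ‖(g : E →L[𝕜] E) - ContinuousLinearMap.id 𝕜 E‖ < ε ∧
      ∀ v, E₁.map ((g : E →L[𝕜] E) : E →ₗ[𝕜] E) ⊓ ⨆ i, fiberwiseImage 𝕜 (f i) v = ⊥ := by
  -- Near a point outside `U i` the family `fiberwiseImage 𝕜 (f i)` may jump from `⊥` to something
  -- large, so local spanning holds only on the strata where the set of `i` with `v ∈ U i` is fixed.
  let S (k : Set α) : Set V := {v | {i | v ∈ U i} = k}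
  have hbot (i : α) (v : V) (hv : v ∉ U i) : fiberwiseImage 𝕜 (f i) v = ⊥ :=
    iSup_eq_bot.2 fun h ↦ absurd h hv
  have hS (k : Set α) (i : α) :
      LocallyC1SpannedOn I (Fin (finrank 𝕜 (M i))) (fiberwiseImage 𝕜 (f i)) (S k) := by
    by_cases hi : i ∈ k
    · refine (locallyC1SpannedOn_fiberwiseImage (hf i) (hlin i) (finBasis 𝕜 (M i))).mono ?_
      rintro v rfl
      exact hi
    · refine LocallyC1SpannedOn.of_eq_bot ?_
      rintro v rfl
      exact hbot i v hi
  refine exists_continuousLinearEquiv_forall_map_inf_eq_bot_of_locallyC1SpannedOn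
    (S := S) (fun v ↦ ⟨_, rfl⟩) (fun k ↦ .iSup (hS k)) E₁ ?_ hε
  simpa only [Fintype.card_sigma, Fintype.card_fin] using hdim

/-- **Lemma 11.4 of the paper.**
`E` is a complex normed space of dimension `d`, `V` a second-countable `C¹` real manifold
without boundary of dimension `D ≥ 1`; for `i = 1, …, l`, `K i` is a compact subset of the open
set `Vo i ⊆ V`, `Efam i` is a `C¹` complex vector bundle of rank `dI i` over `Vo i` (the `C¹`
structure being expressed through `C¹` coordinate changes), and `Fmap i` is a `C¹` map from its
total space to `E` which is complex-linear on each fiber.  `F(v)` is the subspace of `E` spanned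
by the images of the fibers over `v` of those bundles with `v ∈ K i`.  If
`a + D·(d₁ + … + d_l) < d`, then the set of `a`-dimensional subspaces `E₀` of `E` with
`E₀ ∩ F(v) = {0}` for all `v` is dense in the Grassmannian: every `a`-dimensional subspace `E₁`
can be moved into this set by an automorphism `g` of `E` with `‖g - id‖ < ε`. -/
theorem dense_subspaces_transverse_to_fiberwise_images
    {D l d a : ℕ} (hD : 1 ≤ D)
    {E : Type} [NormedAddCommGroup E] [NormedSpace ℂ E] [FiniteDimensional ℂ E]
    (hd : finrank ℂ E = d)
    {V : Type} [TopologicalSpace V] [T2Space V] [SecondCountableTopology V]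
    [ChartedSpace (EuclideanSpace ℝ (Fin D)) V]
    [HasGroupoid V (contDiffGroupoid 1 (𝓡 D))]
    (dI : Fin l → ℕ)
    (Vo : Fin l → Opens V) (K : Fin l → Set V)
    (hKcpt : ∀ i, IsCompact (K i)) (hKV : ∀ i, K i ⊆ (Vo i : Set V))
    (Efam : (i : Fin l) → (Vo i) → Type)
    [∀ i x, AddCommGroup (Efam i x)] [∀ i x, Module ℂ (Efam i x)]
    [∀ i x, TopologicalSpace (Efam i x)]
    [∀ i, TopologicalSpace (TotalSpace (EuclideanSpace ℂ (Fin (dI i))) (Efam i))]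
    [∀ i, FiberBundle (EuclideanSpace ℂ (Fin (dI i))) (Efam i)]
    [∀ i, VectorBundle ℂ (EuclideanSpace ℂ (Fin (dI i))) (Efam i)]
    -- the coordinate changes of each bundle are `C¹`
    (hbundle : ∀ i, ∀ (e e' : Trivialization (EuclideanSpace ℂ (Fin (dI i)))
        (Bundle.TotalSpace.proj (E := Efam i)))
        [MemTrivializationAtlas e] [MemTrivializationAtlas e'],
        ContMDiffOn (𝓡 D)
          𝓘(ℝ, EuclideanSpace ℂ (Fin (dI i)) →L[ℂ] EuclideanSpace ℂ (Fin (dI i))) 1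
          (fun b => (e.coordChangeL ℂ e' b :
            EuclideanSpace ℂ (Fin (dI i)) →L[ℂ] EuclideanSpace ℂ (Fin (dI i))))
          (e.baseSet ∩ e'.baseSet))
    (Fmap : (i : Fin l) → TotalSpace (EuclideanSpace ℂ (Fin (dI i))) (Efam i) → E)
    (hFC1 : ∀ i, ContMDiff ((𝓡 D).prod 𝓘(ℝ, EuclideanSpace ℂ (Fin (dI i)))) 𝓘(ℝ, E) 1 (Fmap i))
    (hFlin : ∀ i (x : Vo i), IsLinearMap ℂ (fun w : Efam i x => Fmap i ⟨x, w⟩))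
    (hdim : a + D * (∑ i, dI i) < d)
    (E₁ : Submodule ℂ E) (hE₁ : finrank ℂ E₁ = a)
    (ε : ℝ) (hε : 0 < ε) :
    ∃ g : E ≃L[ℂ] E,
      ‖(g : E →L[ℂ] E) - ContinuousLinearMap.id ℂ E‖ < ε ∧
      ∀ v : V,
        (Submodule.map ((g : E →L[ℂ] E) : E →ₗ[ℂ] E) E₁) ⊓
          (⨆ i, ⨆ (h : v ∈ K i),
            Submodule.span ℂ (Set.range fun w : Efam i ⟨v, hKV i h⟩ =>
              Fmap i ⟨⟨v, hKV i h⟩, w⟩)) = ⊥ := by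
  have hrank (hs : 0 < ∑ i, dI i) : D + 2 * (a + ∑ i, dI i) < 2 * (d + 1) := by
    nlinarith
  subst hd hE₁
  obtain ⟨g, hgε, hg⟩ := dense_subspaces_transverse_to_fiberwise_images_general hFC1 hFlin E₁
    (by simpa only [finrank_euclideanSpace_fin, Complex.finrank_real_complex] using hrank) hε
  exact ⟨g, hgε, fun v ↦ eq_bot_mono (inf_le_inf_left _ (iSup_mono fun i ↦
    iSup_le fun h ↦ le_iSup_of_le (hKV i h) le_rfl)) (hg v)⟩
end

section
/- (Dimension-counting claim used in the proof of Lemma 11.4 of the paper.) Let E be a real normed vector space of finite dimension n, and let N be a second-countable C¹ real manifold without boundary of dimension m with m < n. Then for every C¹ map f : N → E, the image f(N) is meagre in E; in particular the complement E ∖ f(N) is dense in E. -/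
open scoped Manifold

/-!
Read in charts, a `C¹` map is locally Lipschitz, so it does not raise Hausdorff dimension: the image
of a small compact convex piece of a chart is compact of dimension smaller than that of the target,
hence closed with empty interior. A Lindelöf domain is covered by countably many such pieces, and
Baire's theorem makes the complement of their images dense.
-/

open Set Topology Module

theorem isMeagre_image_of_isLindelof_of_nhdsWithin {X Y : Type*} [TopologicalSpace X]
    [TopologicalSpace Y] {f : X → Y} {s : Set X} (hs : IsLindelof s)
    (hloc : ∀ x ∈ s, ∃ t ∈ 𝓝[s] x, IsMeagre (f '' t)) : IsMeagre (f '' s) := by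
  refine hs.induction_on (p := fun t ↦ IsMeagre (f '' t))
    (fun _ _ hst ht ↦ ht.mono (image_mono hst)) (fun S hS hmeagre ↦ ?_) hloc
  rw [sUnion_eq_biUnion, image_iUnion₂]
  exact isMeagre_biUnion hS hmeagre

section FiniteDimensional

variable {E F : Type*} [NormedAddCommGroup E] [NormedSpace ℝ E] [FiniteDimensional ℝ E]
  [NormedAddCommGroup F] [NormedSpace ℝ F] [FiniteDimensional ℝ F]

theorem isNowhereDense_image_of_contDiffOn {g : F → E} {s K : Set F} (hg : ContDiffOn ℝ 1 g s)
    (hs : Convex ℝ s) (hK : IsCompact K) (hKs : K ⊆ s) (hdim : dimH K < finrank ℝ E) :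
    IsNowhereDense (g '' K) := by
  have hclosed : IsClosed (g '' K) :=
    (hK.image_of_continuousOn (hg.continuousOn.mono hKs)).isClosed
  rw [hclosed.isNowhereDense_iff, interior_eq_empty_iff_dense_compl]
  exact hg.dense_compl_image_of_dimH_lt_finrank hs hKs hdim

theorem exists_mem_nhdsWithin_isNowhereDense_image_of_contDiffWithinAt {g : F → E} {s : Set F}
    {x : F} (hg : ContDiffWithinAt ℝ 1 g s x) (hconvex : Convex ℝ s) (hclosed : IsClosed s)
    (hdim : dimH s < finrank ℝ E) : ∃ t ∈ 𝓝[s] x, IsNowhereDense (g '' t) := by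
  obtain ⟨u, hu, -, hgu⟩ := hg.contDiffOn le_rfl (by simp)
  have hbasis := nhdsWithin_hasBasis (Metric.nhds_basis_closedBall (x := x)) s
  obtain ⟨r, hr, hru⟩ := hbasis.mem_iff.1 (nhdsWithin_mono x (subset_insert x s) hu)
  refine ⟨Metric.closedBall x r ∩ s, hbasis.mem_of_mem hr, ?_⟩
  exact isNowhereDense_image_of_contDiffOn (hgu.mono hru) ((convex_closedBall x r).inter hconvex)
    ((isCompact_closedBall x r).inter_right hclosed) Subset.rfl
    ((dimH_mono inter_subset_right).trans_lt hdim)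

variable {H N : Type*} [TopologicalSpace H] {I : ModelWithCorners ℝ F H} [TopologicalSpace N]
  [ChartedSpace H N] {f : N → E}

theorem exists_mem_nhds_isNowhereDense_image_of_contMDiffAt {x : N}
    (hf : ContMDiffAt I 𝓘(ℝ, E) 1 f x) (hdim : finrank ℝ F < finrank ℝ E) :
    ∃ t ∈ 𝓝 x, IsNowhereDense (f '' t) := by
  have hchart : ContDiffWithinAt ℝ 1 (f ∘ (extChartAt I x).symm) (range I) (extChartAt I x x) :=
    (contMDiffAt_iff_source.1 hf).contDiffWithinAt
  have hdimI : dimH (range I) < finrank ℝ E := calc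
    dimH (range I) ≤ dimH (univ : Set F) := dimH_mono (subset_univ _)
    _ = finrank ℝ F := Real.dimH_univ_eq_finrank F
    _ < finrank ℝ E := by exact_mod_cast hdim
  obtain ⟨t, ht, hnd⟩ := exists_mem_nhdsWithin_isNowhereDense_image_of_contDiffWithinAt hchart
    I.convex_range I.isClosed_range hdimI
  refine ⟨(extChartAt I x).symm '' t, ?_, by rwa [← image_comp]⟩
  rw [← map_extChartAt_symm_nhdsWithin_range (I := I) x]
  exact Filter.image_mem_map ht

theorem image_of_C1_map_is_meagre_of_dim_lt_general {s : Set N} (hs : IsLindelof s)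
    (hf : ∀ x ∈ s, ContMDiffAt I 𝓘(ℝ, E) 1 f x) (hdim : finrank ℝ F < finrank ℝ E) :
    IsMeagre (f '' s) ∧ Dense (f '' s)ᶜ := by
  have hmeagre : IsMeagre (f '' s) := isMeagre_image_of_isLindelof_of_nhdsWithin hs fun x hx ↦
    let ⟨t, ht, hnd⟩ := exists_mem_nhds_isNowhereDense_image_of_contMDiffAt (hf x hx) hdim
    ⟨t, mem_nhdsWithin_of_mem_nhds ht, hnd.isMeagre⟩
  have : CompleteSpace E := FiniteDimensional.complete ℝ E
  exact ⟨hmeagre, dense_of_mem_residual hmeagre⟩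

end FiniteDimensional

/-- **Dimension-counting claim used in the proof of Lemma 11.4.**
If `N` is a second-countable `C¹` real manifold without boundary of dimension `m`,
`E` is a real normed vector space of finite dimension `n`, and `m < n`, then the image of
any `C¹` map `f : N → E` is meagre in `E`; in particular its complement is dense. -/
theorem image_of_C1_map_is_meagre_of_dim_lt
    {m n : ℕ} (hmn : m < n)
    {E : Type} [NormedAddCommGroup E] [NormedSpace ℝ E]
    [FiniteDimensional ℝ E] (hE : Module.finrank ℝ E = n)
    {N : Type} [TopologicalSpace N] [T2Space N] [SecondCountableTopology N]
    [ChartedSpace (EuclideanSpace ℝ (Fin m)) N]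
    [HasGroupoid N (contDiffGroupoid 1 (𝓡 m))]
    (f : N → E) (hf : ContMDiff (𝓡 m) 𝓘(ℝ, E) 1 f) :
    IsMeagre (Set.range f) ∧ Dense (Set.range f)ᶜ := by
  rw [← image_univ]
  exact image_of_C1_map_is_meagre_of_dim_lt_general isLindelof_univ (fun x _ ↦ hf x)
    (by rwa [finrank_euclideanSpace_fin, hE])
end

section
/- (Analytic mechanism behind Lemma 9.1 and Proposition 9.4 of the paper: exponential decay of all T-derivatives implies smoothness in the coordinate s = 1/T up to s = 0.) Let k, N ∈ ℕ, let U ⊆ ℝ^k be open, let T₀ ≥ 1, and let f : U × (T₀, ∞) → ℝ^N be a C^∞ map with the following property: for every multi-index α in the U-variables and every integer j ≥ 1 there exist constants C > 0 and c > 0 such that ‖∂_p^α ∂_T^j f(p, T)‖ ≤ C·e^{−c·T} for all (p, T) ∈ U × (T₀, ∞). Then: (a) for every p ∈ U the limit f_∞(p) := lim_{T→∞} f(p, T) exists and f_∞ : U → ℝ^N is C^∞; (b) the function g : U × [0, 1/T₀) → ℝ^N defined by g(p, s) = f(p, 1/s) for s > 0 and g(p, 0) = f_∞(p) is C^n on the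 set U × [0, 1/T₀) for every n ∈ ℕ (smoothness at points with s = 0 meant in the within-set sense, ContDiffOn), and every partial derivative of g involving at least one differentiation in the s-variable vanishes at every point with s = 0. -/
open Set Filter

/-!
Only rapid decay matters: every `T`-derivative is `O(T⁻ᵐ)` for all `m`. Integrating `∂_T f` from
`T` to `∞` shows that `f - f_∞` and all its derivatives decay rapidly, uniformly in `p`, and the
uniform convergence of the `p`-derivatives makes `f_∞` smooth. For a rapidly decaying `h` the
function `s⁻ᵐ h(p, 1/s)`, extended by zero to `s ≤ 0`, is `O(s²)` at `s = 0`, and its derivatives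
are again of this form, so it is smooth. Hence `g`, extended by `f_∞` to `s ≤ 0`, is smooth on an
open set; being constant in `s` for `s ≤ 0`, it has vanishing `s`-derivatives at `s = 0`.
-/

open scoped ContDiff Topology

noncomputable section

universe u

section PartialDerivatives

variable {E F : Type*} [NormedAddCommGroup E] [NormedSpace ℝ E]
  [NormedAddCommGroup F] [NormedSpace ℝ F]

/-- The partial derivative `∂_p h` of a function of `(p, T) ∈ E × ℝ`, meaningful where `h` is
differentiable. -/
def fderivFst (h : E × ℝ → F) (x : E × ℝ) : E →L[ℝ] F :=
  (fderiv ℝ h x).comp (ContinuousLinearMap.inl ℝ E ℝ)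

/-- The partial derivative `∂_T h` of a function of `(p, T) ∈ E × ℝ`, meaningful where `h` is
differentiable. -/
def derivSnd (h : E × ℝ → F) (x : E × ℝ) : F :=
  fderiv ℝ h x (0, 1)

variable {h h' : E × ℝ → F} {W : Set (E × ℝ)} {x : E × ℝ}

theorem hasFDerivAt_fderivFst (hh : DifferentiableAt ℝ h x) :
    HasFDerivAt (fun q => h (q, x.2)) (fderivFst h x) x.1 :=
  hh.hasFDerivAt.comp (f := fun q => (q, x.2)) x.1 (hasFDerivAt_prodMk_left x.1 x.2)

theorem hasDerivAt_derivSnd (hh : DifferentiableAt ℝ h x) :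
    HasDerivAt (fun S => h (x.1, S)) (derivSnd h x) x.2 :=
  hh.hasFDerivAt.comp_hasDerivAt (f := fun S => (x.1, S)) x.2
    ((hasDerivAt_const x.2 x.1).prodMk (hasDerivAt_id x.2))

theorem fderiv_apply_eq_fderivFst_add_smul_derivSnd (v : E) (t : ℝ) :
    fderiv ℝ h x (v, t) = fderivFst h x v + t • derivSnd h x := by
  simp [fderivFst, derivSnd, ← map_smul, ← map_add]

theorem differentiableAt_of_contDiffOn (hW : IsOpen W) (hh : ContDiffOn ℝ ∞ h W)
    (hx : x ∈ W) : DifferentiableAt ℝ h x :=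
  (hh.contDiffAt (hW.mem_nhds hx)).differentiableAt (by simp)

theorem contDiffOn_fderivFst (hW : IsOpen W) (hh : ContDiffOn ℝ ∞ h W) :
    ContDiffOn ℝ ∞ (fderivFst h) W :=
  (hh.fderiv_of_isOpen hW (by simp)).clm_comp contDiffOn_const

theorem contDiffOn_derivSnd (hW : IsOpen W) (hh : ContDiffOn ℝ ∞ h W) :
    ContDiffOn ℝ ∞ (derivSnd h) W :=
  (hh.fderiv_of_isOpen hW (by simp)).clm_apply contDiffOn_const

theorem contDiffOn_iterate_derivSnd (hW : IsOpen W) (hh : ContDiffOn ℝ ∞ h W) (j : ℕ) :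
    ContDiffOn ℝ ∞ (derivSnd^[j] h) W :=
  Function.Iterate.rec (fun h => ContDiffOn ℝ ∞ h W) hh (fun _ => contDiffOn_derivSnd hW) j

theorem eqOn_derivSnd (hW : IsOpen W) (heq : EqOn h h' W) :
    EqOn (derivSnd h) (derivSnd h') W := fun x hx => by
  simp only [derivSnd, (heq.eventuallyEq_of_mem (hW.mem_nhds hx)).fderiv_eq]

theorem eqOn_iterate_derivSnd (hW : IsOpen W) (heq : EqOn h h' W) (j : ℕ) :
    EqOn (derivSnd^[j] h) (derivSnd^[j] h') W := by
  induction j with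
  | zero => exact heq
  | succ j ih =>
    simp only [Function.iterate_succ_apply']
    exact eqOn_derivSnd hW ih

theorem eqOn_derivSnd_fderivFst (hW : IsOpen W) (hh : ContDiffOn ℝ ∞ h W) :
    EqOn (derivSnd (fderivFst h)) (fderivFst (derivSnd h)) W := by
  intro x hx
  have symm_snd : IsSymmSndFDerivAt ℝ h x :=
    (hh.contDiffAt (hW.mem_nhds hx)).isSymmSndFDerivAt (by
      rw [minSmoothness_of_isRCLikeNormedField]
      exact WithTop.coe_le_coe.2 le_top)
  have hfderiv : HasFDerivAt (fderiv ℝ h) (fderiv ℝ (fderiv ℝ h) x) x :=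
    (differentiableAt_of_contDiffOn hW (hh.fderiv_of_isOpen hW (by simp)) hx).hasFDerivAt
  have hfst : HasFDerivAt (fderivFst h) _ x := hfderiv.clm_comp (hasFDerivAt_const _ x)
  have hsnd : HasFDerivAt (derivSnd h) _ x := hfderiv.clm_apply (hasFDerivAt_const _ x)
  ext v
  rw [derivSnd, fderivFst, hfst.fderiv, hsnd.fderiv]
  simpa using symm_snd (0, 1) (v, 0)

theorem eqOn_iterate_derivSnd_fderivFst (hW : IsOpen W) (hh : ContDiffOn ℝ ∞ h W) (j : ℕ) :
    EqOn (derivSnd^[j] (fderivFst h)) (fderivFst (derivSnd^[j] h)) W := by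
  induction j with
  | zero => exact eqOn_refl _ _
  | succ j ih =>
    simp only [Function.iterate_succ_apply']
    exact (eqOn_derivSnd hW ih).trans
      (eqOn_derivSnd_fderivFst hW (contDiffOn_iterate_derivSnd hW hh j))

theorem iteratedDerivWithin_eq_iterate_derivSnd {U : Set E} {I : Set ℝ} (hU : IsOpen U)
    (hI : IsOpen I) (hh : ContDiffOn ℝ ∞ h (U ×ˢ I)) {p : E} (hp : p ∈ U) (j : ℕ) :
    EqOn (iteratedDerivWithin j (fun S => h (p, S)) I) (fun T => (derivSnd^[j] h) (p, T)) I := by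
  induction j with
  | zero => intro T _; simp
  | succ j ih =>
    intro T hT
    have hdiff : DifferentiableAt ℝ (derivSnd^[j] h) (p, T) :=
      differentiableAt_of_contDiffOn (hU.prod hI)
        (contDiffOn_iterate_derivSnd (hU.prod hI) hh j) ⟨hp, hT⟩
    rw [iteratedDerivWithin_succ, derivWithin_congr ih (ih hT), derivWithin_of_isOpen hI hT]
    simpa only [Function.iterate_succ_apply'] using (hasDerivAt_derivSnd hdiff).deriv

end PartialDerivatives

section OneVariable

variable {F : Type*} [NormedAddCommGroup F] [NormedSpace ℝ F]

theorem pow_mul_exp_neg_mul_le {c T : ℝ} (hc : 0 < c) (hT : 0 ≤ T) (m : ℕ) :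
    T ^ m * Real.exp (-c * T) ≤ m.factorial / c ^ m := by
  have hexp := Real.pow_div_factorial_le_exp (c * T) (by positivity) m
  rw [div_le_iff₀ (by positivity), mul_pow] at hexp
  rw [neg_mul, Real.exp_neg, ← div_eq_mul_inv, div_le_div_iff₀ (Real.exp_pos _) (by positivity)]
  linarith

theorem pow_mul_le_of_le_mul_exp_neg_mul {C c T r : ℝ} (hC : 0 ≤ C) (hc : 0 < c) (hT : 0 ≤ T)
    (hr : r ≤ C * Real.exp (-c * T)) (m : ℕ) : T ^ m * r ≤ C * (m.factorial / c ^ m) :=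
  calc T ^ m * r ≤ T ^ m * (C * Real.exp (-c * T)) := by gcongr
    _ = C * (T ^ m * Real.exp (-c * T)) := by ring
    _ ≤ C * (m.factorial / c ^ m) := by gcongr; exact pow_mul_exp_neg_mul_le hc hT m

theorem hasDerivAt_inv_pow {s : ℝ} (hs : s ≠ 0) (m : ℕ) :
    HasDerivAt (fun s : ℝ => s⁻¹ ^ m) (-(m * s⁻¹ ^ (m + 1))) s := by
  refine ((hasDerivAt_inv hs).fun_pow m).congr_deriv ?_
  cases m with
  | zero => simp
  | succ m => simp only [Nat.add_sub_cancel]; ring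

theorem iteratedDeriv_eq_zero_of_eqOn_Iic_const {φ : ℝ → F} {a : ℝ} {y : F} {j : ℕ} (hj : j ≠ 0)
    (hφ : ContDiffAt ℝ j φ a) (hconst : EqOn φ (fun _ => y) (Iic a)) :
    iteratedDeriv j φ a = 0 := by
  rw [← iteratedDerivWithin_eq_iteratedDeriv (uniqueDiffOn_Iic a) hφ self_mem_Iic,
    iteratedDerivWithin_congr hconst self_mem_Iic, iteratedDerivWithin_const, if_neg hj]

variable {φ φ' : ℝ → F} {T₀ C : ℝ} {m : ℕ}

theorem pow_succ_mul_norm_sub_le_of_pow_mul_norm_deriv_le (hT₀ : 0 ≤ T₀)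
    (hφ : ∀ T ∈ Ioi T₀, HasDerivAt φ (φ' T) T)
    (hφ' : ∀ T ∈ Ioi T₀, T ^ (m + 2) * ‖φ' T‖ ≤ C) {a b : ℝ} (ha : T₀ < a) (hab : a ≤ b) :
    a ^ (m + 1) * ‖φ b - φ a‖ ≤ C := by
  have ha₀ : 0 < a := hT₀.trans_lt ha
  have hb₀ : 0 < b := ha₀.trans_le hab
  have hmem : ∀ x ∈ Icc a b, x ∈ Ioi T₀ := fun x hx => ha.trans_le hx.1
  have hderiv : ∀ x ∈ Icc a b, HasDerivAt (fun S => a ^ m • (φ S - φ a)) (a ^ m • φ' x) x :=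
    fun x hx => ((hφ x (hmem x hx)).sub_const _).const_smul _
  have hbound : ∀ x ∈ Ico a b, ‖a ^ m • φ' x‖ ≤ C * (x ^ 2)⁻¹ := by
    intro x hx
    have hx₀ : 0 < x := ha₀.trans_le hx.1
    rw [norm_smul, Real.norm_of_nonneg (by positivity), ← div_eq_mul_inv,
      le_div_iff₀ (by positivity)]
    calc a ^ m * ‖φ' x‖ * x ^ 2 ≤ x ^ m * ‖φ' x‖ * x ^ 2 := by gcongr; exact hx.1
      _ = x ^ (m + 2) * ‖φ' x‖ := by ring
      _ ≤ C := hφ' x (hmem x (Ico_subset_Icc_self hx))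
  have hB : ∀ x ∈ Icc a b, HasDerivAt (fun x => C * (a⁻¹ - x⁻¹)) (C * (x ^ 2)⁻¹) x := by
    intro x hx
    simpa using ((hasDerivAt_inv (ha₀.trans_le hx.1).ne').const_sub a⁻¹).const_mul C
  have hmean : ‖a ^ m • (φ b - φ a)‖ ≤ C * (a⁻¹ - b⁻¹) :=
    image_norm_le_of_norm_deriv_right_le_deriv_boundary'
      (fun x hx => (hderiv x hx).continuousAt.continuousWithinAt)
      (fun x hx => (hderiv x (Ico_subset_Icc_self hx)).hasDerivWithinAt) (by simp)
      (fun x hx => (hB x hx).continuousAt.continuousWithinAt)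
      (fun x hx => (hB x (Ico_subset_Icc_self hx)).hasDerivWithinAt)
      hbound (right_mem_Icc.2 hab)
  have hC : 0 ≤ C := le_trans (by positivity) (hφ' b (ha.trans_le hab))
  rw [norm_smul, Real.norm_of_nonneg (by positivity)] at hmean
  calc a ^ (m + 1) * ‖φ b - φ a‖ = a * (a ^ m * ‖φ b - φ a‖) := by ring
    _ ≤ a * (C * (a⁻¹ - b⁻¹)) := by gcongr
    _ ≤ a * (C * a⁻¹) := by gcongr; exact sub_le_self _ (inv_nonneg.2 hb₀.le)
    _ = C := by field_simp

theorem exists_tendsto_atTop_of_sq_mul_norm_deriv_le [CompleteSpace F] (hT₀ : 0 ≤ T₀)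
    (hφ : ∀ T ∈ Ioi T₀, HasDerivAt φ (φ' T) T)
    (hφ' : ∀ T ∈ Ioi T₀, T ^ 2 * ‖φ' T‖ ≤ C) : ∃ y, Tendsto φ atTop (𝓝 y) := by
  refine cauchySeq_tendsto_of_complete (Metric.cauchySeq_iff'.2 fun ε hε => ?_)
  obtain ⟨a, ha, haC⟩ := ((eventually_gt_atTop T₀).and (eventually_gt_atTop (C / ε))).exists
  have ha₀ : 0 < a := hT₀.trans_lt ha
  refine ⟨a, fun b hab => ?_⟩
  have hsub : a ^ (0 + 1) * ‖φ b - φ a‖ ≤ C :=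
    pow_succ_mul_norm_sub_le_of_pow_mul_norm_deriv_le hT₀ hφ hφ' ha hab
  rw [zero_add, pow_one] at hsub
  rw [div_lt_iff₀ hε] at haC
  rw [dist_eq_norm]
  exact lt_of_mul_lt_mul_left (hsub.trans_lt haC) ha₀.le

theorem pow_succ_mul_norm_sub_le_of_tendsto_atTop (hT₀ : 0 ≤ T₀)
    (hφ : ∀ T ∈ Ioi T₀, HasDerivAt φ (φ' T) T)
    (hφ' : ∀ T ∈ Ioi T₀, T ^ (m + 2) * ‖φ' T‖ ≤ C) {y : F} (hy : Tendsto φ atTop (𝓝 y))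
    {a : ℝ} (ha : T₀ < a) : a ^ (m + 1) * ‖φ a - y‖ ≤ C := by
  rw [norm_sub_rev]
  refine le_of_tendsto ((hy.sub_const (φ a)).norm.const_mul (a ^ (m + 1))) ?_
  filter_upwards [eventually_ge_atTop a] with b hab
  exact pow_succ_mul_norm_sub_le_of_pow_mul_norm_deriv_le hT₀ hφ hφ' ha hab

end OneVariable

section RapidDecay

/-- Smooth functions `h` on `U × (T₀, ∞)` all of whose derivatives `∂_p^i ∂_T^j h` with `j ≥ J` are
`O(T⁻ᵐ)` for every `m`, uniformly in `p ∈ U`. The case `J = 1` is the class of the theorem, which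
contains functions with nonzero limits; in the case `J = 0` the function decays too. -/
structure RapidDecayFrom {E F : Type*} [NormedAddCommGroup E] [NormedSpace ℝ E]
    [NormedAddCommGroup F] [NormedSpace ℝ F] (J : ℕ) (U : Set E) (T₀ : ℝ) (h : E × ℝ → F) :
    Prop where
  contDiffOn : ContDiffOn ℝ ∞ h (U ×ˢ Ioi T₀)
  decay : ∀ i j m : ℕ, J ≤ j → ∃ C, ∀ p ∈ U, ∀ T ∈ Ioi T₀,
    T ^ m * ‖iteratedFDerivWithin ℝ i (fun q => (derivSnd^[j] h) (q, T)) U p‖ ≤ C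

/-- The pointwise limit `lim_{T → ∞} h(p, T)`, a junk value where the limit does not exist. -/
def limAtTop {E F : Type*} [NormedAddCommGroup F] (h : E × ℝ → F) (p : E) : F :=
  limUnder atTop fun T => h (p, T)

namespace RapidDecayFrom

section Basic

variable {E F : Type*} [NormedAddCommGroup E] [NormedSpace ℝ E]
  [NormedAddCommGroup F] [NormedSpace ℝ F] {U : Set E} {T₀ : ℝ} {h : E × ℝ → F} {J : ℕ}

theorem of_iteratedDerivWithin (hU : IsOpen U) (hh : ContDiffOn ℝ ∞ h (U ×ˢ Ioi T₀))
    (hdecay : ∀ i j m : ℕ, J ≤ j → ∃ C, ∀ p ∈ U, ∀ T ∈ Ioi T₀,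
      T ^ m * ‖iteratedFDerivWithin ℝ i
        (fun q => iteratedDerivWithin j (fun S => h (q, S)) (Ioi T₀) T) U p‖ ≤ C) :
    RapidDecayFrom J U T₀ h := by
  refine ⟨hh, fun i j m hj => (hdecay i j m hj).imp fun C hC p hp T hT => ?_⟩
  have heq : EqOn (fun q => (derivSnd^[j] h) (q, T))
      (fun q => iteratedDerivWithin j (fun S => h (q, S)) (Ioi T₀) T) U :=
    fun q hq => (iteratedDerivWithin_eq_iterate_derivSnd hU isOpen_Ioi hh hq j hT).symm
  rw [iteratedFDerivWithin_congr heq hp]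
  exact hC p hp T hT

theorem differentiableAt (hU : IsOpen U) (hh : RapidDecayFrom J U T₀ h) {x : E × ℝ}
    (hx : x ∈ U ×ˢ Ioi T₀) : DifferentiableAt ℝ h x :=
  differentiableAt_of_contDiffOn (hU.prod isOpen_Ioi) hh.contDiffOn hx

protected theorem fderivFst (hU : IsOpen U) (hh : RapidDecayFrom J U T₀ h) :
    RapidDecayFrom J U T₀ (fderivFst h) := by
  have hW : IsOpen (U ×ˢ Ioi T₀) := hU.prod isOpen_Ioi
  refine ⟨contDiffOn_fderivFst hW hh.contDiffOn, fun i j m hj =>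
    (hh.decay (i + 1) j m hj).imp fun C hC p hp T hT => ?_⟩
  have heq : EqOn (fun q => (derivSnd^[j] (fderivFst h)) (q, T))
      (fderivWithin ℝ (fun q => (derivSnd^[j] h) (q, T)) U) U := by
    intro q hq
    have hdiff : DifferentiableAt ℝ (derivSnd^[j] h) (q, T) := differentiableAt_of_contDiffOn hW
      (contDiffOn_iterate_derivSnd hW hh.contDiffOn j) ⟨hq, hT⟩
    rw [fderivWithin_of_isOpen hU hq, (hasFDerivAt_fderivFst hdiff).fderiv]
    exact eqOn_iterate_derivSnd_fderivFst hW hh.contDiffOn j ⟨hq, hT⟩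
  rw [iteratedFDerivWithin_congr heq hp, norm_iteratedFDerivWithin_fderivWithin hU.uniqueDiffOn hp]
  exact hC p hp T hT

protected theorem derivSnd (hU : IsOpen U) (hh : RapidDecayFrom J U T₀ h) :
    RapidDecayFrom J U T₀ (derivSnd h) :=
  ⟨contDiffOn_derivSnd (hU.prod isOpen_Ioi) hh.contDiffOn, fun i j m hj => by
    simpa only [Function.iterate_succ_apply] using hh.decay i (j + 1) m (by omega)⟩

theorem exists_pow_mul_norm_le (hh : RapidDecayFrom 0 U T₀ h) (m : ℕ) :
    ∃ C, ∀ p ∈ U, ∀ T ∈ Ioi T₀, T ^ m * ‖h (p, T)‖ ≤ C := by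
  simpa using hh.decay 0 0 m le_rfl

theorem exists_pow_mul_norm_derivSnd_le (hh : RapidDecayFrom 1 U T₀ h) (m : ℕ) :
    ∃ C, ∀ p ∈ U, ∀ T ∈ Ioi T₀, T ^ m * ‖derivSnd h (p, T)‖ ≤ C := by
  simpa using hh.decay 0 1 m le_rfl

theorem hasDerivAt (hU : IsOpen U) (hh : RapidDecayFrom J U T₀ h) {p : E} (hp : p ∈ U) {T : ℝ}
    (hT : T ∈ Ioi T₀) : HasDerivAt (fun S => h (p, S)) (derivSnd h (p, T)) T :=
  hasDerivAt_derivSnd (hh.differentiableAt hU (x := (p, T)) ⟨hp, hT⟩)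

theorem hasFDerivAt (hU : IsOpen U) (hh : RapidDecayFrom J U T₀ h) {p : E} (hp : p ∈ U) {T : ℝ}
    (hT : T ∈ Ioi T₀) : HasFDerivAt (fun q => h (q, T)) (fderivFst h (p, T)) p :=
  hasFDerivAt_fderivFst (hh.differentiableAt hU (x := (p, T)) ⟨hp, hT⟩)

variable [CompleteSpace F]

theorem tendsto_limAtTop (hU : IsOpen U) (hT₀ : 0 < T₀) (hh : RapidDecayFrom 1 U T₀ h) {p : E}
    (hp : p ∈ U) : Tendsto (fun T => h (p, T)) atTop (𝓝 (limAtTop h p)) := by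
  obtain ⟨C, hC⟩ := hh.exists_pow_mul_norm_derivSnd_le 2
  exact tendsto_nhds_limUnder (exists_tendsto_atTop_of_sq_mul_norm_deriv_le hT₀.le
    (fun T hT => hh.hasDerivAt hU hp hT) (hC p hp))

theorem exists_pow_mul_norm_sub_limAtTop_le (hU : IsOpen U) (hT₀ : 0 < T₀)
    (hh : RapidDecayFrom 1 U T₀ h) (m : ℕ) :
    ∃ C, ∀ p ∈ U, ∀ T ∈ Ioi T₀, T ^ m * ‖h (p, T) - limAtTop h p‖ ≤ C := by
  obtain ⟨C, hC⟩ := hh.exists_pow_mul_norm_derivSnd_le (m + 2)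
  refine ⟨C / T₀, fun p hp T hT => (le_div_iff₀ hT₀).2 ?_⟩
  have hT' : 0 < T := hT₀.trans hT
  calc T ^ m * ‖h (p, T) - limAtTop h p‖ * T₀
      ≤ T ^ m * ‖h (p, T) - limAtTop h p‖ * T := by gcongr; exact hT.le
    _ = T ^ (m + 1) * ‖h (p, T) - limAtTop h p‖ := by ring
    _ ≤ C := pow_succ_mul_norm_sub_le_of_tendsto_atTop hT₀.le
      (fun _ hS => hh.hasDerivAt hU hp hS) (hC p hp) (hh.tendsto_limAtTop hU hT₀ hp) hT

theorem tendstoUniformlyOn_limAtTop (hU : IsOpen U) (hT₀ : 0 < T₀) (hh : RapidDecayFrom 1 U T₀ h) :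
    TendstoUniformlyOn (fun T p => h (p, T)) (limAtTop h) atTop U := by
  obtain ⟨C, hC⟩ := hh.exists_pow_mul_norm_sub_limAtTop_le hU hT₀ 1
  refine Metric.tendstoUniformlyOn_iff.2 fun ε hε => ?_
  filter_upwards [eventually_gt_atTop T₀, eventually_gt_atTop (C / ε)] with T hT hTC p hp
  have hdist : T * ‖h (p, T) - limAtTop h p‖ ≤ C := by simpa using hC p hp T hT
  rw [dist_comm, dist_eq_norm]
  rw [div_lt_iff₀ hε] at hTC
  exact lt_of_mul_lt_mul_left (hdist.trans_lt hTC) (hT₀.trans hT).le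

theorem hasFDerivAt_limAtTop (hU : IsOpen U) (hT₀ : 0 < T₀) (hh : RapidDecayFrom 1 U T₀ h) {p : E}
    (hp : p ∈ U) : HasFDerivAt (limAtTop h) (limAtTop (fderivFst h) p) p := by
  have hUp : ∀ᶠ q in 𝓝 p, q ∈ U := hU.mem_nhds hp
  refine hasFDerivAt_of_tendstoUniformlyOnFilter (l := atTop) (f := fun T q => h (q, T))
    (f' := fun T q => fderivFst h (q, T)) ?_ ?_
    (hUp.mono fun q hq => hh.tendsto_limAtTop hU hT₀ hq)
  · exact ((hh.fderivFst hU).tendstoUniformlyOn_limAtTop hU hT₀).tendstoUniformlyOnFilter.mono_right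
      (le_principal_iff.2 hUp)
  · filter_upwards [(eventually_gt_atTop T₀).prod_mk hUp] with x hx
    exact hh.hasFDerivAt hU hx.2 hx.1

theorem eqOn_derivSnd_sub_limAtTop (hU : IsOpen U) (hT₀ : 0 < T₀) (hh : RapidDecayFrom 1 U T₀ h) :
    EqOn (derivSnd fun x => h x - limAtTop h x.1) (derivSnd h) (U ×ˢ Ioi T₀) := by
  intro x hx
  have hsub : HasFDerivAt (fun x => h x - limAtTop h x.1) _ x :=
    (hh.differentiableAt hU hx).hasFDerivAt.sub
      ((hh.hasFDerivAt_limAtTop hU hT₀ hx.1).comp x hasFDerivAt_fst)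
  simp [derivSnd, hsub.fderiv]

end Basic

variable {E F : Type u} [NormedAddCommGroup E] [NormedSpace ℝ E]
  [NormedAddCommGroup F] [NormedSpace ℝ F] [CompleteSpace F] {U : Set E} {T₀ : ℝ} {h : E × ℝ → F}

theorem contDiffOn_limAtTop (hU : IsOpen U) (hT₀ : 0 < T₀) (hh : RapidDecayFrom 1 U T₀ h) :
    ContDiffOn ℝ ∞ (limAtTop h) U := by
  refine contDiffOn_infty.2 fun n => ?_
  induction n generalizing F with
  | zero =>
    exact contDiffOn_zero.2 fun p hp =>
      (hh.hasFDerivAt_limAtTop hU hT₀ hp).continuousAt.continuousWithinAt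
  | succ n ih =>
    push_cast
    refine (contDiffOn_succ_iff_fderiv_of_isOpen hU).2 ⟨fun p hp =>
      (hh.hasFDerivAt_limAtTop hU hT₀ hp).differentiableAt.differentiableWithinAt, by simp, ?_⟩
    exact (ih (hh.fderivFst hU)).congr fun p hp => (hh.hasFDerivAt_limAtTop hU hT₀ hp).fderiv

theorem exists_pow_mul_norm_iteratedFDerivWithin_sub_limAtTop_le (hU : IsOpen U)
    (hT₀ : 0 < T₀) (hh : RapidDecayFrom 1 U T₀ h) (i m : ℕ) :
    ∃ C, ∀ p ∈ U, ∀ T ∈ Ioi T₀,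
      T ^ m * ‖iteratedFDerivWithin ℝ i (fun q => h (q, T) - limAtTop h q) U p‖ ≤ C := by
  induction i generalizing F with
  | zero => simpa using hh.exists_pow_mul_norm_sub_limAtTop_le hU hT₀ m
  | succ i ih =>
    refine (ih (hh.fderivFst hU)).imp fun C hC p hp T hT => ?_
    have heq : EqOn (fderivWithin ℝ (fun q => h (q, T) - limAtTop h q) U)
        (fun q => fderivFst h (q, T) - limAtTop (fderivFst h) q) U := by
      intro q hq
      rw [fderivWithin_of_isOpen hU hq]
      exact ((hh.hasFDerivAt hU hq hT).sub (hh.hasFDerivAt_limAtTop hU hT₀ hq)).fderiv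
    rw [← norm_iteratedFDerivWithin_fderivWithin hU.uniqueDiffOn hp,
      iteratedFDerivWithin_congr heq hp]
    exact hC p hp T hT

theorem sub_limAtTop (hU : IsOpen U) (hT₀ : 0 < T₀) (hh : RapidDecayFrom 1 U T₀ h) :
    RapidDecayFrom 0 U T₀ fun x => h x - limAtTop h x.1 := by
  refine ⟨hh.contDiffOn.sub ((hh.contDiffOn_limAtTop hU hT₀).comp contDiffOn_fst
    fun x hx => hx.1), fun i j m _ => ?_⟩
  cases j with
  | zero => exact hh.exists_pow_mul_norm_iteratedFDerivWithin_sub_limAtTop_le hU hT₀ i m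
  | succ j =>
    refine (hh.decay i (j + 1) m (by omega)).imp fun C hC p hp T hT => ?_
    have heq : EqOn (fun q => (derivSnd^[j + 1] fun x => h x - limAtTop h x.1) (q, T))
        (fun q => (derivSnd^[j + 1] h) (q, T)) U := fun q hq =>
      eqOn_iterate_derivSnd (hU.prod isOpen_Ioi) (hh.eqOn_derivSnd_sub_limAtTop hU hT₀) j ⟨hq, hT⟩
    rw [iteratedFDerivWithin_congr heq hp]
    exact hC p hp T hT

end RapidDecayFrom

end RapidDecay

theorem inv_mem_Ioi_of_mem_Ioo {s T₀ : ℝ} (hs : s ∈ Ioo 0 T₀⁻¹) : s⁻¹ ∈ Ioi T₀ :=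
  lt_inv_of_lt_inv₀ hs.1 hs.2

section FlatExtension

variable {E F : Type*} [NormedAddCommGroup F] [NormedSpace ℝ F] {h : E × ℝ → F} {m : ℕ} {x : E × ℝ}

/-- The function `s⁻ᵐ h(p, 1/s)` of `(p, s)`, extended by zero to `s ≤ 0`. The powers of `s⁻¹` make
the family of these functions closed under differentiation. -/
def flatExtension (m : ℕ) (h : E × ℝ → F) (x : E × ℝ) : F :=
  if x.2 ≤ 0 then 0 else x.2⁻¹ ^ m • h (x.1, x.2⁻¹)

theorem flatExtension_of_nonpos (hx : x.2 ≤ 0) : flatExtension m h x = 0 :=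
  if_pos hx

theorem flatExtension_of_pos (hx : 0 < x.2) :
    flatExtension m h x = x.2⁻¹ ^ m • h (x.1, x.2⁻¹) :=
  if_neg hx.not_ge

variable [NormedAddCommGroup E] [NormedSpace ℝ E] {U : Set E} {T₀ : ℝ}

theorem RapidDecayFrom.exists_norm_flatExtension_le (hh : RapidDecayFrom 0 U T₀ h) (m : ℕ) :
    ∃ C, ∀ x ∈ U ×ˢ Ioo 0 T₀⁻¹, ‖flatExtension m h x‖ ≤ C * x.2 ^ 2 := by
  refine (hh.exists_pow_mul_norm_le (m + 2)).imp fun C hC x hx => ?_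
  have hs : 0 < x.2 := hx.2.1
  calc ‖flatExtension m h x‖ = x.2⁻¹ ^ m * ‖h (x.1, x.2⁻¹)‖ := by
        rw [flatExtension_of_pos hs, norm_smul, Real.norm_of_nonneg (by positivity)]
    _ = x.2⁻¹ ^ (m + 2) * ‖h (x.1, x.2⁻¹)‖ * x.2 ^ 2 := by
        rw [pow_add, inv_pow x.2 2]
        field_simp
    _ ≤ C * x.2 ^ 2 := by
        gcongr
        exact hC x.1 hx.1 x.2⁻¹ (inv_mem_Ioi_of_mem_Ioo hx.2)

theorem RapidDecayFrom.hasFDerivAt_flatExtension_of_nonpos (hU : IsOpen U) (hT₀ : 0 < T₀)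
    (hh : RapidDecayFrom 0 U T₀ h) (hx : x.1 ∈ U) (hs : x.2 ≤ 0) :
    HasFDerivAt (flatExtension m h) (0 : E × ℝ →L[ℝ] F) x := by
  obtain ⟨C, hC⟩ := hh.exists_norm_flatExtension_le m
  suffices hO : (fun y => flatExtension m h y) =O[𝓝 x] fun y => ‖y - x‖ ^ 2 from
    hO.hasFDerivAt one_lt_two
  refine Asymptotics.IsBigO.of_bound |C| ?_
  have hnhds : U ×ˢ Iio T₀⁻¹ ∈ 𝓝 x :=
    (hU.prod isOpen_Iio).mem_nhds ⟨hx, hs.trans_lt (inv_pos.2 hT₀)⟩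
  filter_upwards [hnhds] with y hy
  rcases le_or_gt y.2 0 with hy₀ | hy₀
  · rw [flatExtension_of_nonpos hy₀, norm_zero]
    positivity
  · have hle : y.2 ≤ ‖y - x‖ :=
      calc y.2 ≤ (y - x).2 := by rw [Prod.snd_sub]; linarith
        _ ≤ ‖(y - x).2‖ := Real.le_norm_self _
        _ ≤ ‖y - x‖ := norm_snd_le _
    rw [norm_pow, norm_norm]
    calc ‖flatExtension m h y‖ ≤ C * y.2 ^ 2 := hC y ⟨hy.1, hy₀, hy.2⟩
      _ ≤ |C| * ‖y - x‖ ^ 2 := by gcongr; exact le_abs_self C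

/-- The derivative of `flatExtension m h`, obtained from
`∂_s (s⁻ᵐ h(p, 1/s)) = -m s⁻ᵐ⁻¹ h(p, 1/s) - s⁻ᵐ⁻² (∂_T h)(p, 1/s)`. -/
def flatExtensionFDeriv (m : ℕ) (h : E × ℝ → F) (x : E × ℝ) : E × ℝ →L[ℝ] F :=
  (flatExtension m (fderivFst h) x).comp (ContinuousLinearMap.fst ℝ E ℝ) +
    (ContinuousLinearMap.snd ℝ E ℝ).smulRight
      (-((m : ℝ) • flatExtension (m + 1) h x) - flatExtension (m + 2) (derivSnd h) x)

theorem hasFDerivAt_flatExtension_of_pos (hs : 0 < x.2)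
    (hh : DifferentiableAt ℝ h (x.1, x.2⁻¹)) :
    HasFDerivAt (flatExtension m h) (flatExtensionFDeriv m h x) x := by
  have heq : flatExtension m h =ᶠ[𝓝 x] fun y => y.2⁻¹ ^ m • h (y.1, y.2⁻¹) := by
    filter_upwards [continuousAt_snd.eventually (lt_mem_nhds hs)] with y hy
    exact flatExtension_of_pos hy
  have hsnd : HasFDerivAt Prod.snd (ContinuousLinearMap.snd ℝ E ℝ) x := hasFDerivAt_snd
  have hpow : HasFDerivAt (fun y : E × ℝ => y.2⁻¹ ^ m) _ x :=
    (hasDerivAt_inv_pow hs.ne' m).comp_hasFDerivAt x hsnd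
  have hinv : HasFDerivAt (fun y : E × ℝ => y.2⁻¹) _ x :=
    (hasDerivAt_inv hs.ne').comp_hasFDerivAt x hsnd
  have hcomp : HasFDerivAt (fun y : E × ℝ => h (y.1, y.2⁻¹)) _ x :=
    hh.hasFDerivAt.comp x (hasFDerivAt_fst.prodMk hinv)
  refine ((hpow.smul hcomp).congr_of_eventuallyEq heq).congr_fderiv ?_
  refine ContinuousLinearMap.ext fun ⟨v, t⟩ => ?_
  simp only [flatExtensionFDeriv, flatExtension_of_pos hs,
    fderiv_apply_eq_fderivFst_add_smul_derivSnd, add_apply, smul_apply, smul_eq_mul,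
    ContinuousLinearMap.comp_apply, ContinuousLinearMap.prod_apply, ContinuousLinearMap.coe_fst',
    ContinuousLinearMap.coe_snd', ContinuousLinearMap.smulRight_apply]
  module

theorem RapidDecayFrom.hasFDerivAt_flatExtension (hU : IsOpen U) (hT₀ : 0 < T₀)
    (hh : RapidDecayFrom 0 U T₀ h) (hx : x ∈ U ×ˢ Iio T₀⁻¹) :
    HasFDerivAt (flatExtension m h) (flatExtensionFDeriv m h x) x := by
  rcases le_or_gt x.2 0 with hs | hs
  · refine (hh.hasFDerivAt_flatExtension_of_nonpos hU hT₀ hx.1 hs).congr_fderiv ?_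
    simp [flatExtensionFDeriv, flatExtension_of_nonpos hs]
  · exact hasFDerivAt_flatExtension_of_pos hs
      (hh.differentiableAt hU ⟨hx.1, inv_mem_Ioi_of_mem_Ioo ⟨hs, hx.2⟩⟩)

end FlatExtension

theorem RapidDecayFrom.contDiffOn_flatExtension {E F : Type u} [NormedAddCommGroup E]
    [NormedSpace ℝ E] [NormedAddCommGroup F] [NormedSpace ℝ F] {U : Set E} {T₀ : ℝ}
    {h : E × ℝ → F} (hU : IsOpen U) (hT₀ : 0 < T₀) (hh : RapidDecayFrom 0 U T₀ h) (m : ℕ) :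
    ContDiffOn ℝ ∞ (flatExtension m h) (U ×ˢ Iio T₀⁻¹) := by
  refine contDiffOn_infty.2 fun n => ?_
  induction n generalizing F m with
  | zero =>
    exact contDiffOn_zero.2 fun x hx =>
      (hh.hasFDerivAt_flatExtension hU hT₀ hx).continuousAt.continuousWithinAt
  | succ n ih =>
    push_cast
    refine (contDiffOn_succ_iff_fderiv_of_isOpen (hU.prod isOpen_Iio)).2 ⟨fun x hx =>
      (hh.hasFDerivAt_flatExtension hU hT₀ hx).differentiableAt.differentiableWithinAt,
      by simp, ContDiffOn.congr ?_ fun x hx => (hh.hasFDerivAt_flatExtension hU hT₀ hx).fderiv⟩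
    exact ((ih (hh.fderivFst hU) m).clm_comp contDiffOn_const).add <| contDiffOn_const.smulRight <|
      (contDiffOn_const.smul (ih hh (m + 1))).neg.sub (ih (hh.derivSnd hU) (m + 2))

section InverseExtension

variable {E F : Type*} [NormedAddCommGroup F] (h : E × ℝ → F)

/-- The function `g` of the theorem, continued to `s < 0` by its value at `s = 0`; unlike `g` it
is smooth on an open set. -/
def inverseExtension (x : E × ℝ) : F :=
  if x.2 ≤ 0 then limAtTop h x.1 else h (x.1, x.2⁻¹)

theorem inverseExtension_eq_limAtTop_add_flatExtension [NormedSpace ℝ F] (x : E × ℝ) :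
    inverseExtension h x =
      limAtTop h x.1 + flatExtension 0 (fun y => h y - limAtTop h y.1) x := by
  simp only [inverseExtension, flatExtension]
  split_ifs <;> simp

theorem inverseExtension_of_nonneg {x : E × ℝ} (hx : 0 ≤ x.2) :
    inverseExtension h x = if x.2 = 0 then limAtTop h x.1 else h (x.1, x.2⁻¹) := by
  simp only [inverseExtension, hx.ge_iff_eq']

end InverseExtension

namespace RapidDecayFrom

variable {E F : Type u} [NormedAddCommGroup E] [NormedSpace ℝ E]
  [NormedAddCommGroup F] [NormedSpace ℝ F] [CompleteSpace F] {U : Set E} {T₀ : ℝ} {h : E × ℝ → F}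

theorem contDiffOn_inverseExtension (hU : IsOpen U) (hT₀ : 0 < T₀)
    (hh : RapidDecayFrom 1 U T₀ h) : ContDiffOn ℝ ∞ (inverseExtension h) (U ×ˢ Iio T₀⁻¹) := by
  refine ContDiffOn.congr ?_ fun x _ => inverseExtension_eq_limAtTop_add_flatExtension h x
  exact ((hh.contDiffOn_limAtTop hU hT₀).comp contDiffOn_fst fun x hx => hx.1).add
    ((hh.sub_limAtTop hU hT₀).contDiffOn_flatExtension hU hT₀ 0)

theorem iteratedDerivWithin_inverseExtension_zero (hU : IsOpen U) (hT₀ : 0 < T₀)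
    (hh : RapidDecayFrom 1 U T₀ h) {p : E} (hp : p ∈ U) {j : ℕ} (hj : j ≠ 0) :
    iteratedDerivWithin j (fun s => inverseExtension h (p, s)) (Ico 0 T₀⁻¹) 0 = 0 := by
  have hT₀' : 0 < T₀⁻¹ := inv_pos.2 hT₀
  have hsmooth : ContDiffAt ℝ j (fun s : ℝ => inverseExtension h (p, s)) 0 :=
    (((hh.contDiffOn_inverseExtension hU hT₀).of_le (mod_cast le_top)).contDiffAt
      ((hU.prod isOpen_Iio).mem_nhds (x := (p, 0)) ⟨hp, hT₀'⟩)).comp (0 : ℝ)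
      (contDiffAt_const.prodMk contDiffAt_id)
  rw [iteratedDerivWithin_eq_iteratedDeriv (uniqueDiffOn_Ico _ _) hsmooth ⟨le_rfl, hT₀'⟩]
  exact iteratedDeriv_eq_zero_of_eqOn_Iic_const (y := limAtTop h p) hj hsmooth
    fun s hs => if_pos (mem_Iic.1 hs)

end RapidDecayFrom

end

theorem smooth_in_inverse_variable_of_exponential_decay_general
    {E F : Type u} [NormedAddCommGroup E] [NormedSpace ℝ E]
    [NormedAddCommGroup F] [NormedSpace ℝ F] [CompleteSpace F]
    {U : Set E} (hU : IsOpen U) {T₀ : ℝ} (hT₀ : 0 < T₀) {f : E × ℝ → F}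
    (hf : ContDiffOn ℝ ∞ f (U ×ˢ Ioi T₀))
    (hdecay : ∀ i j m : ℕ, 1 ≤ j → ∃ C, ∀ p ∈ U, ∀ T ∈ Ioi T₀,
      T ^ m * ‖iteratedFDerivWithin ℝ i
        (fun q => iteratedDerivWithin j (fun S => f (q, S)) (Ioi T₀) T) U p‖ ≤ C) :
    ∃ flim : E → F,
      (∀ p ∈ U, Tendsto (fun T => f (p, T)) atTop (𝓝 (flim p))) ∧
      ContDiffOn ℝ ∞ flim U ∧
      (∀ n : ℕ, ContDiffOn ℝ n
        (fun x => if x.2 = 0 then flim x.1 else f (x.1, x.2⁻¹)) (U ×ˢ Ico 0 T₀⁻¹)) ∧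
      (∀ i j : ℕ, 1 ≤ j → ∀ p ∈ U,
        iteratedFDerivWithin ℝ i
          (fun q => iteratedDerivWithin j
            (fun s => if s = 0 then flim q else f (q, s⁻¹)) (Ico 0 T₀⁻¹) 0) U p = 0) := by
  have hrapid : RapidDecayFrom 1 U T₀ f := .of_iteratedDerivWithin hU hf hdecay
  refine ⟨limAtTop f, fun p hp => hrapid.tendsto_limAtTop hU hT₀ hp,
    hrapid.contDiffOn_limAtTop hU hT₀, fun n => ?_, fun i j hj p hp => ?_⟩
  · have hsmooth : ContDiffOn ℝ n (inverseExtension f) (U ×ˢ Ico 0 T₀⁻¹) :=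
      (contDiffOn_infty.1 (hrapid.contDiffOn_inverseExtension hU hT₀) n).mono
        (prod_mono_right Ico_subset_Iio_self)
    exact hsmooth.congr fun x hx => (inverseExtension_of_nonneg f hx.2.1).symm
  · have hzero : EqOn (fun q => iteratedDerivWithin j
        (fun s => if s = 0 then limAtTop f q else f (q, s⁻¹)) (Ico 0 T₀⁻¹) 0) 0 U := by
      intro q hq
      have heq : EqOn (fun s => if s = 0 then limAtTop f q else f (q, s⁻¹))
          (fun s => inverseExtension f (q, s)) (Ico 0 T₀⁻¹) :=
        fun s hs => (inverseExtension_of_nonneg f (x := (q, s)) hs.1).symm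
      exact (iteratedDerivWithin_congr heq ⟨le_rfl, inv_pos.2 hT₀⟩).trans
        (hrapid.iteratedDerivWithin_inverseExtension_zero hU hT₀ hq (by omega))
    rw [iteratedFDerivWithin_congr hzero hp, iteratedFDerivWithin_zero, Pi.zero_apply]

/-- **Exponential decay of all `T`-derivatives implies smoothness in `s = 1/T` up to `s = 0`
(the analytic mechanism behind Lemma 9.1 and Proposition 9.4 of the paper).**
Let `f : U × (T₀,∞) → ℝ^N` be `C^∞`, and assume that every mixed partial derivative
`∂_p^α ∂_T^j f` with at least one `T`-differentiation (`j ≥ 1`) is bounded by `C e^{-cT}`.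
Then (a) `f(p,T)` converges as `T → ∞` to a `C^∞` function `f_∞` of `p ∈ U`, and
(b) the function `g(p,s) = f(p,1/s)` for `s > 0`, `g(p,0) = f_∞(p)`, is `C^n` on
`U × [0, 1/T₀)` for every `n`, and every partial derivative of `g` involving at least one
`s`-differentiation vanishes at the points with `s = 0`. -/
theorem smooth_in_inverse_variable_of_exponential_decay
    (k N : ℕ) (U : Set (EuclideanSpace ℝ (Fin k))) (hU : IsOpen U)
    (T₀ : ℝ) (hT₀ : 1 ≤ T₀)
    (f : EuclideanSpace ℝ (Fin k) × ℝ → EuclideanSpace ℝ (Fin N))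
    (hf : ContDiffOn ℝ (⊤ : ℕ∞) f (U ×ˢ Ioi T₀))
    (hdecay : ∀ i j : ℕ, 1 ≤ j → ∃ C > (0:ℝ), ∃ c > (0:ℝ), ∀ p ∈ U, ∀ T ∈ Ioi T₀,
      ‖iteratedFDerivWithin ℝ i
          (fun q => iteratedDerivWithin j (fun S => f (q, S)) (Ioi T₀) T) U p‖
        ≤ C * Real.exp (-c * T)) :
    ∃ flim : EuclideanSpace ℝ (Fin k) → EuclideanSpace ℝ (Fin N),
      (∀ p ∈ U, Tendsto (fun T => f (p, T)) atTop (nhds (flim p))) ∧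
      ContDiffOn ℝ (⊤ : ℕ∞) flim U ∧
      (∀ n : ℕ, ContDiffOn ℝ n
        (fun x => if x.2 = 0 then flim x.1 else f (x.1, x.2⁻¹)) (U ×ˢ Ico 0 T₀⁻¹)) ∧
      (∀ i j : ℕ, 1 ≤ j → ∀ p ∈ U,
        iteratedFDerivWithin ℝ i
          (fun q => iteratedDerivWithin j
            (fun s => if s = 0 then flim q else f (q, s⁻¹)) (Ico 0 T₀⁻¹) 0) U p = 0) := by
  refine smooth_in_inverse_variable_of_exponential_decay_general hU (by positivity) hf
    fun i j m hj => ?_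
  obtain ⟨C, hC, c, hc, hbound⟩ := hdecay i j hj
  exact ⟨_, fun p hp T hT => pow_mul_le_of_le_mul_exp_neg_mul hC.le hc
    (by linarith [mem_Ioi.1 hT]) (hbound p hp T hT) m⟩
end
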